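/- arXiv:2303.15204 — 5 statements merged into one kernel-verified Lean document; each statement's English description precedes it below -/
import Mathlib

section
/- For every natural number n there exist constants c > 0 and C > 0, depending only on n, with the following property: for every point x0 ∈ ℝ, every h > 0, and every coefficient vector a : Fin (n+1) → ℝ, the polynomial p(x) = Σ_{i=0}^{n} a_i · ((x − x0)/h)^i satisfies c · h · Σ_{i=0}^{n} a_i² ≤ ∫_{x0 − h/2}^{x0 + h/2} p(x)² dx ≤ C · h · Σ_{i=0}^{n} a_i². -/
/-!
The substitution `t = (x - x0) / h` turns the integral into `h` times the squared norm, in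
`L²(-1/2, 1/2)`, of the polynomial `∑ a i * t ^ i`, which removes `x0` and `h` from the problem.
A nonzero polynomial has only finitely many zeros, so the monomials are linearly independent in
`L²`, and the coefficient map is an injective linear map out of a finite-dimensional space. Such a
map is bounded above and below.
-/

open MeasureTheory Polynomial
open scoped ENNReal

theorem exists_bounds_norm_sum_smul_sq {𝕜 ι E : Type*} [RCLike 𝕜] [Fintype ι]
    [NormedAddCommGroup E] [NormedSpace 𝕜 E] {b : ι → E} (hb : LinearIndependent 𝕜 b) :
    ∃ c > (0 : ℝ), ∃ C > (0 : ℝ), ∀ a : ι → 𝕜,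
      c * ∑ i, ‖a i‖ ^ 2 ≤ ‖∑ i, a i • b i‖ ^ 2 ∧
      ‖∑ i, a i • b i‖ ^ 2 ≤ C * ∑ i, ‖a i‖ ^ 2 := by
  let T : EuclideanSpace 𝕜 ι →ₗ[𝕜] E :=
    Fintype.linearCombination 𝕜 b ∘ₗ (WithLp.linearEquiv 2 𝕜 (ι → 𝕜)).toLinearMap
  have hT : Function.Injective T :=
    hb.fintypeLinearCombination_injective.comp (WithLp.linearEquiv 2 𝕜 (ι → 𝕜)).injective
  obtain ⟨K, hK, hlower⟩ := T.injective_iff_antilipschitz.mp hT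
  obtain ⟨M, hM, hupper⟩ := T.toContinuousLinearMap.bound
  refine ⟨((K : ℝ) ^ 2)⁻¹, by positivity, M ^ 2, by positivity, fun a ↦ ?_⟩
  have hTa : T (WithLp.toLp 2 a) = ∑ i, a i • b i := rfl
  have hnorm : ∑ i, ‖a i‖ ^ 2 = ‖WithLp.toLp 2 a‖ ^ 2 := (EuclideanSpace.norm_sq_eq _).symm
  rw [hnorm, ← hTa]
  constructor
  · rw [inv_mul_le_iff₀ (by positivity), ← mul_pow]
    gcongr
    exact ZeroHomClass.bound_of_antilipschitz T hlower _
  · rw [← mul_pow]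
    gcongr
    exact hupper _

theorem norm_toLp_two_sq {α E : Type*} [MeasurableSpace α] {μ : Measure α}
    [NormedAddCommGroup E] {f : α → E} (hf : MemLp f 2 μ) :
    ‖hf.toLp f‖ ^ 2 = ∫ x, ‖f x‖ ^ 2 ∂μ := by
  have hnorm : ‖hf.toLp f‖ = (∫ x, ‖f x‖ ^ 2 ∂μ) ^ ((2 : ℕ) : ℝ)⁻¹ := by
    simpa [Lp.norm_toLp, toReal_eLpNorm hf.aestronglyMeasurable] using
      lpNorm_eq_integral_norm_rpow_toReal two_ne_zero ENNReal.ofNat_ne_top hf.aestronglyMeasurable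
  rw [hnorm, Real.rpow_inv_natCast_pow (by positivity) two_ne_zero]

section PolynomialToLp

variable {𝕜 : Type*} [NormedField 𝕜] [MeasurableSpace 𝕜] {q : ℝ≥0∞} {μ : Measure 𝕜}

/-- The linear map sending a polynomial to the class of its evaluation function in `L^q(μ)`, for a
measure `μ` on the base field against which all polynomials are `q`-integrable. -/
noncomputable def polynomialToLp (hμ : ∀ p : 𝕜[X], MemLp (fun x ↦ p.eval x) q μ) :
    𝕜[X] →ₗ[𝕜] Lp 𝕜 q μ where
  toFun p := (hμ p).toLp
  map_add' p r := by
    simp only [eval_add]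
    exact MemLp.toLp_add (hμ p) (hμ r)
  map_smul' a p := by
    simp only [eval_smul]
    exact MemLp.toLp_const_smul a (hμ p)

theorem polynomialToLp_injective [NullSingletonClass μ] [NeZero μ]
    (hμ : ∀ p : 𝕜[X], MemLp (fun x ↦ p.eval x) q μ) :
    Function.Injective (polynomialToLp hμ) := by
  refine (injective_iff_map_eq_zero _).mpr fun p hp ↦ ?_
  have hroot : ∀ᵐ x ∂μ, p.IsRoot x := by
    have hae := (MemLp.toLp_eq_toLp_iff (hμ p) (hμ 0)).mp
      (hp.trans (map_zero (polynomialToLp hμ)).symm)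
    exact hae.mono fun x hx ↦ hx.trans eval_zero
  by_contra hp0
  have hnull : ∀ᵐ x ∂μ, ¬ p.IsRoot x :=
    measure_eq_zero_iff_ae_notMem.mp ((finite_setOfPred_isRoot hp0).measure_zero μ)
  obtain ⟨x, hx, hx'⟩ := (hroot.and hnull).exists
  exact hx' hx

theorem linearIndependent_polynomialToLp_X_pow [NullSingletonClass μ] [NeZero μ]
    (hμ : ∀ p : 𝕜[X], MemLp (fun x ↦ p.eval x) q μ) :
    LinearIndependent 𝕜 fun i : ℕ ↦ polynomialToLp hμ (X ^ i) := by
  have hX : LinearIndependent 𝕜 fun i : ℕ ↦ (X ^ i : 𝕜[X]) := by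
    simpa only [coe_basisMonomials, monomial_one_right_eq_X_pow] using
      (basisMonomials 𝕜).linearIndependent
  exact hX.map_injOn _ (polynomialToLp_injective hμ).injOn

end PolynomialToLp

theorem exists_bounds_integral_norm_sum_mul_pow_sq {𝕜 : Type*} [RCLike 𝕜] [MeasurableSpace 𝕜]
    {μ : Measure 𝕜} [NullSingletonClass μ] [NeZero μ]
    (hμ : ∀ p : 𝕜[X], MemLp (fun x ↦ p.eval x) 2 μ) (n : ℕ) :
    ∃ c > (0 : ℝ), ∃ C > (0 : ℝ), ∀ a : Fin n → 𝕜,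
      c * ∑ i, ‖a i‖ ^ 2 ≤ ∫ t, ‖∑ i, a i * t ^ (i : ℕ)‖ ^ 2 ∂μ ∧
      ∫ t, ‖∑ i, a i * t ^ (i : ℕ)‖ ^ 2 ∂μ ≤ C * ∑ i, ‖a i‖ ^ 2 := by
  have hindep : LinearIndependent 𝕜 fun i : Fin n ↦ polynomialToLp hμ (X ^ (i : ℕ)) :=
    (linearIndependent_polynomialToLp_X_pow hμ).comp _ Fin.val_injective
  have hint (a : Fin n → 𝕜) : ‖∑ i, a i • polynomialToLp hμ (X ^ (i : ℕ))‖ ^ 2 =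
      ∫ t, ‖∑ i, a i * t ^ (i : ℕ)‖ ^ 2 ∂μ := by
    simp only [← map_smul, ← map_sum]
    refine (norm_toLp_two_sq (hμ _)).trans ?_
    simp only [eval_finsetSum, eval_smul, eval_pow, eval_X, smul_eq_mul]
  simpa only [hint] using exists_bounds_norm_sum_smul_sq hindep

theorem memLp_two_restrict_Ioc_of_continuous {F : Type*} [NormedAddCommGroup F] {μ : Measure ℝ}
    [IsLocallyFiniteMeasure μ] {f : ℝ → F} (hf : Continuous f) (a b : ℝ) :
    MemLp f 2 (μ.restrict (Set.Ioc a b)) :=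
  (memLp_two_iff_integrable_sq_norm hf.aestronglyMeasurable).mpr (hf.norm.pow 2).integrableOn_Ioc

theorem exists_bounds_intervalIntegral_sum_mul_pow_sq {α β : ℝ} (hαβ : α < β) (n : ℕ) :
    ∃ c > (0 : ℝ), ∃ C > (0 : ℝ), ∀ a : Fin n → ℝ,
      c * ∑ i, a i ^ 2 ≤ ∫ t in α..β, (∑ i, a i * t ^ (i : ℕ)) ^ 2 ∧
      ∫ t in α..β, (∑ i, a i * t ^ (i : ℕ)) ^ 2 ≤ C * ∑ i, a i ^ 2 := by
  have : NeZero (volume.restrict (Set.Ioc α β)) := ⟨by simpa using hαβ⟩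
  simpa only [intervalIntegral.integral_of_le hαβ.le, Real.norm_eq_abs, sq_abs] using
    exists_bounds_integral_norm_sum_mul_pow_sq
      (fun p ↦ memLp_two_restrict_Ioc_of_continuous p.continuous α β) n

theorem intervalIntegral_comp_sub_midpoint_div {E : Type*} [NormedAddCommGroup E] [NormedSpace ℝ E]
    (f : ℝ → E) (x0 : ℝ) {h : ℝ} (hh : h ≠ 0) :
    ∫ x in (x0 - h / 2)..(x0 + h / 2), f ((x - x0) / h) =
      h • ∫ t in (-(1 / 2))..(1 / 2), f t := by
  simp only [sub_div _ x0 h]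
  rw [intervalIntegral.integral_comp_div_sub f hh]
  congr 2 <;> field

/-- Norm equivalence, uniform in the midpoint `x0` and length `h`, between the squared
`L²` norm over `[x0 - h/2, x0 + h/2]` of a polynomial expanded in the shifted and scaled
monomial basis `x ↦ ((x - x0)/h)^i`, `0 ≤ i ≤ n`, and `h` times the squared `ℓ²` norm of
its coefficient vector. -/
theorem stmt0 (n : ℕ) :
    ∃ c > (0 : ℝ), ∃ C > (0 : ℝ), ∀ (x0 h : ℝ), 0 < h → ∀ a : Fin (n + 1) → ℝ,
      c * h * (∑ i : Fin (n + 1), a i ^ 2) ≤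
        (∫ x in (x0 - h / 2)..(x0 + h / 2),
          (∑ i : Fin (n + 1), a i * ((x - x0) / h) ^ (i : ℕ)) ^ 2) ∧
      (∫ x in (x0 - h / 2)..(x0 + h / 2),
          (∑ i : Fin (n + 1), a i * ((x - x0) / h) ^ (i : ℕ)) ^ 2) ≤
        C * h * (∑ i : Fin (n + 1), a i ^ 2) := by
  obtain ⟨c, hc, C, hC, hbounds⟩ :=
    exists_bounds_intervalIntegral_sum_mul_pow_sq (α := -(1 / 2)) (β := 1 / 2) (by norm_num) (n + 1)
  refine ⟨c, hc, C, hC, fun x0 h hh a ↦ ?_⟩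
  obtain ⟨hlower, hupper⟩ := hbounds a
  rw [intervalIntegral_comp_sub_midpoint_div (fun t ↦ (∑ i, a i * t ^ (i : ℕ)) ^ 2) x0 hh.ne',
    smul_eq_mul, mul_comm c, mul_comm C, mul_assoc, mul_assoc]
  exact ⟨mul_le_mul_of_nonneg_left hlower hh.le, mul_le_mul_of_nonneg_left hupper hh.le⟩
end

section
/- For every natural number n and every ρ ∈ (0, 1] there exist constants c > 0 and C > 0, depending only on n and ρ, with the following property: for every x0 ∈ ℝ², every h > 0, every measurable set K ⊆ ℝ² satisfying closedBall(x0, ρ·h) ⊆ K ⊆ closedBall(x0, h), and every family of coefficients b_α ∈ ℝ indexed by multi-indices α = (α₁, α₂) with α₁ + α₂ ≤ n, the polynomial p(x) = Σ_{|α| ≤ n} b_α · ((x₁ − x0₁)/h)^{α₁} · ((x₂ − x0₂)/h)^{α₂} satisfies c · h² · Σ_{|α| ≤ n} b_α² ≤ ∫_K p(x)² dx ≤ C · h² · Σ_{|α| ≤ n} b_α². -/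
open MeasureTheory Metric

/-!
The substitution `x = x₀ + h y` turns the integral over `K` into `h ^ d` times an integral over a
reference set lying between `closedBall 0 ρ` and `closedBall 0 1`, so by monotonicity only these two
fixed balls matter. On each of them the monomials are square-integrable; on the smaller one they are
linearly independent in `L²`, because a polynomial vanishing on a nonempty open set is zero. Since
all norms on the finite-dimensional span of the monomials are equivalent, the `L²` norm and the `ℓ²`
norm of the coefficients control each other.
-/

section NormEquivalence

variable {κ E : Type*} [NormedAddCommGroup E] [NormedSpace ℝ E]

lemma norm_sum_smul_sq_le (S : Finset κ) (v : κ → E) (b : κ → ℝ) :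
    ‖∑ i ∈ S, b i • v i‖ ^ 2 ≤ (∑ i ∈ S, ‖v i‖ ^ 2) * ∑ i ∈ S, b i ^ 2 :=
  calc ‖∑ i ∈ S, b i • v i‖ ^ 2
    _ ≤ (∑ i ∈ S, ‖v i‖ * |b i|) ^ 2 := by
      gcongr
      exact norm_sum_le_of_le S fun i _ ↦ by rw [norm_smul, Real.norm_eq_abs, mul_comm]
    _ ≤ (∑ i ∈ S, ‖v i‖ ^ 2) * ∑ i ∈ S, |b i| ^ 2 := Finset.sum_mul_sq_le_sq_mul_sq S _ _
    _ = (∑ i ∈ S, ‖v i‖ ^ 2) * ∑ i ∈ S, b i ^ 2 := by simp only [sq_abs]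

lemma exists_pos_mul_sum_sq_le_norm_sum_smul_sq {S : Finset κ} {v : κ → E}
    (hv : LinearIndepOn ℝ v S) :
    ∃ c > 0, ∀ b : κ → ℝ, c * ∑ i ∈ S, b i ^ 2 ≤ ‖∑ i ∈ S, b i • v i‖ ^ 2 := by
  let T : EuclideanSpace ℝ S →ₗ[ℝ] E :=
    Fintype.linearCombination ℝ (fun i : S ↦ v i) ∘ₗ (WithLp.linearEquiv 2 ℝ (S → ℝ)).toLinearMap
  have hT : T.ker = ⊥ := LinearMap.ker_eq_bot.2 <|
    (LinearIndependent.fintypeLinearCombination_injective hv).comp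
      (WithLp.linearEquiv 2 ℝ (S → ℝ)).injective
  obtain ⟨L, hL, hTL⟩ := T.exists_antilipschitzWith hT
  refine ⟨((L : ℝ) ^ 2)⁻¹, by positivity, fun b ↦ ?_⟩
  let w : EuclideanSpace ℝ S := WithLp.toLp 2 fun i ↦ b i
  have hw : ‖w‖ ^ 2 = ∑ i ∈ S, b i ^ 2 := by
    simp only [w, EuclideanSpace.real_norm_sq_eq, Finset.sum_coe_sort S fun i ↦ b i ^ 2]
  have hTw : T w = ∑ i ∈ S, b i • v i := by
    simp [T, w, Fintype.linearCombination_apply, Finset.sum_attach S fun i ↦ b i • v i]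
  rw [← hw, ← hTw, inv_mul_le_iff₀ (by positivity), ← mul_pow]
  gcongr
  exact hTL.le_mul_norm (map_zero T) w

end NormEquivalence

section SquareIntegrable

variable {κ X : Type*} [MeasurableSpace X] {μ : Measure X} {f : κ → X → ℝ}

lemma norm_sum_smul_toLp_sq (hf : ∀ i, MemLp (f i) 2 μ) (S : Finset κ) (b : κ → ℝ) :
    ‖∑ i ∈ S, b i • (hf i).toLp (f i)‖ ^ 2 = ∫ x, (∑ i ∈ S, b i * f i x) ^ 2 ∂μ := by
  have hae : ∀ᵐ x ∂μ, (∑ i ∈ S, b i • (hf i).toLp (f i) : Lp ℝ 2 μ) x = ∑ i ∈ S, b i * f i x := by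
    have hcoe : ∀ᵐ x ∂μ, ∀ i ∈ S, (b i • (hf i).toLp (f i) : Lp ℝ 2 μ) x = b i * f i x := by
      rw [Filter.eventually_all_finset]
      intro i _
      filter_upwards [Lp.coeFn_smul (b i) ((hf i).toLp (f i)), (hf i).coeFn_toLp] with x h₁ h₂
      rw [h₁, Pi.smul_apply, h₂, smul_eq_mul]
    filter_upwards [Lp.coeFn_finsetSum S fun i ↦ b i • (hf i).toLp (f i), hcoe] with x h₁ h₂
    rw [h₁, Finset.sum_apply, Finset.sum_congr rfl h₂]
  rw [← real_inner_self_eq_norm_sq, L2.inner_def]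
  refine integral_congr_ae ?_
  filter_upwards [hae] with x hx
  rw [real_inner_self_eq_norm_sq, hx, Real.norm_eq_abs, sq_abs]

lemma exists_pos_integral_sum_mul_sq_le (hf : ∀ i, MemLp (f i) 2 μ) (S : Finset κ) :
    ∃ C > 0, ∀ b : κ → ℝ, ∫ x, (∑ i ∈ S, b i * f i x) ^ 2 ∂μ ≤ C * ∑ i ∈ S, b i ^ 2 := by
  refine ⟨∑ i ∈ S, ‖(hf i).toLp (f i)‖ ^ 2 + 1, by positivity, fun b ↦ ?_⟩
  rw [← norm_sum_smul_toLp_sq hf]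
  refine (norm_sum_smul_sq_le S _ b).trans ?_
  gcongr
  exact le_add_of_nonneg_right zero_le_one

lemma exists_pos_mul_sum_sq_le_integral_sum_mul_sq (hf : ∀ i, MemLp (f i) 2 μ) {S : Finset κ}
    (hS : ∀ b : κ → ℝ, (fun x ↦ ∑ i ∈ S, b i * f i x) =ᵐ[μ] 0 → ∀ i ∈ S, b i = 0) :
    ∃ c > 0, ∀ b : κ → ℝ, c * ∑ i ∈ S, b i ^ 2 ≤ ∫ x, (∑ i ∈ S, b i * f i x) ^ 2 ∂μ := by
  have hli : LinearIndepOn ℝ (fun i ↦ (hf i).toLp (f i)) S := by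
    refine linearIndepOn_finset_iff.2 fun b hb ↦ hS b ?_
    have hint : Integrable (fun x ↦ (∑ i ∈ S, b i * f i x) ^ 2) μ :=
      (memLp_finsetSum S fun i _ ↦ (hf i).const_mul (b i)).integrable_sq
    have hzero : ∫ x, (∑ i ∈ S, b i * f i x) ^ 2 ∂μ = 0 := by
      rw [← norm_sum_smul_toLp_sq hf, hb, norm_zero, zero_pow two_ne_zero]
    filter_upwards [(integral_eq_zero_iff_of_nonneg (fun _ ↦ sq_nonneg _) hint).1 hzero]
      with x hx using (pow_eq_zero_iff two_ne_zero).1 hx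
  simpa only [norm_sum_smul_toLp_sq] using exists_pos_mul_sum_sq_le_norm_sum_smul_sq hli

end SquareIntegrable

section Dilation

variable {E F : Type*} [NormedAddCommGroup E] [NormedSpace ℝ E]

lemma preimage_add_smul_closedBall (x₀ : E) {h : ℝ} (hh : 0 < h) (r : ℝ) :
    (fun y ↦ x₀ + h • y) ⁻¹' closedBall x₀ (r * h) = closedBall 0 r := by
  ext y
  rw [Set.mem_preimage, add_mem_closedBall_iff_norm, norm_smul, Real.norm_of_nonneg hh.le,
    mul_comm, mul_le_mul_iff_left₀ hh, mem_closedBall_zero_iff]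

open scoped Pointwise in
lemma setIntegral_comp_inv_smul_sub [MeasurableSpace E] [BorelSpace E] [FiniteDimensional ℝ E]
    (μ : Measure E) [μ.IsAddHaarMeasure] [NormedAddCommGroup F] [NormedSpace ℝ F] (g : E → F)
    (K : Set E) (x₀ : E) {h : ℝ} (hh : 0 < h) :
    ∫ x in K, g (h⁻¹ • (x - x₀)) ∂μ =
      h ^ Module.finrank ℝ E • ∫ y in (fun y ↦ x₀ + h • y) ⁻¹' K, g y ∂μ := by
  have hdilate : h⁻¹ • ((x₀ + ·) ⁻¹' K) = (fun y ↦ x₀ + h • y) ⁻¹' K :=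
    Set.ext fun y ↦ Set.mem_inv_smul_set_iff₀ hh.ne' _ _
  calc ∫ x in K, g (h⁻¹ • (x - x₀)) ∂μ
    _ = ∫ z in (x₀ + ·) ⁻¹' K, g (h⁻¹ • z) ∂μ := by
      simpa only [add_sub_cancel_left] using
        ((measurePreserving_add_left μ x₀).setIntegral_preimage_emb (measurableEmbedding_addLeft x₀)
          (fun x ↦ g (h⁻¹ • (x - x₀))) K).symm
    _ = h ^ Module.finrank ℝ E • ∫ y in (fun y ↦ x₀ + h • y) ⁻¹' K, g y ∂μ := by
      rw [Measure.setIntegral_comp_smul_of_pos μ g _ (inv_pos.2 hh), hdilate, inv_pow, inv_inv]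

end Dilation

open scoped Topology in
lemma mvPolynomial_eq_zero_of_eval_eq_zero_on_open {ι R : Type*} [Finite ι] [CommRing R]
    [IsDomain R] [TopologicalSpace R] [T1Space R] [∀ r : R, (𝓝[≠] r).NeBot] {U : Set (ι → R)}
    (hU : IsOpen U) (hne : U.Nonempty) {p : MvPolynomial ι R}
    (hp : ∀ x ∈ U, MvPolynomial.eval x p = 0) : p = 0 := by
  obtain ⟨a, ha⟩ := hne
  obtain ⟨s, hs, hsU⟩ := isOpen_pi_iff'.1 hU a ha
  refine MvPolynomial.funext_set s
    (fun i ↦ infinite_of_mem_nhds (a i) ((hs i).1.mem_nhds (hs i).2)) fun x hx ↦ ?_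
  rw [hp x (hsU hx), map_zero]

section Monomials

variable {ι : Type*} [Fintype ι]

/-- The monomial function `x ↦ ∏ i, x i ^ α i` of multi-index `α`. The monomials shifted to `x₀` and
scaled by `h` are the functions `x ↦ monomialFun α (h⁻¹ • (x - x₀))`. -/
noncomputable def monomialFun (α : ι →₀ ℕ) (x : EuclideanSpace ℝ ι) : ℝ :=
  ∏ i, x i ^ α i

@[fun_prop]
lemma continuous_monomialFun (α : ι →₀ ℕ) : Continuous (monomialFun α) := by
  unfold monomialFun
  fun_prop

lemma memLp_two_monomialFun {μ : Measure (EuclideanSpace ℝ ι)} [IsFiniteMeasureOnCompacts μ]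
    {A : Set (EuclideanSpace ℝ ι)} (hA : IsCompact A) (α : ι →₀ ℕ) :
    MemLp (monomialFun α) 2 (μ.restrict A) :=
  (memLp_two_iff_integrable_sq (continuous_monomialFun α).aestronglyMeasurable).2 <|
    ((continuous_monomialFun α).pow 2).continuousOn.integrableOn_compact hA

lemma eq_zero_of_sum_mul_monomialFun_eq_zero_on_open {U : Set (EuclideanSpace ℝ ι)}
    (hU : IsOpen U) (hne : U.Nonempty) {S : Finset (ι →₀ ℕ)} {b : (ι →₀ ℕ) → ℝ}
    (hb : ∀ x ∈ U, ∑ α ∈ S, b α * monomialFun α x = 0) : ∀ α ∈ S, b α = 0 := by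
  classical
  let p : MvPolynomial ι ℝ := ∑ α ∈ S, MvPolynomial.monomial α (b α)
  have heval (x : ι → ℝ) :
      MvPolynomial.eval x p = ∑ α ∈ S, b α * monomialFun α (WithLp.toLp 2 x) := by
    simp [p, monomialFun, MvPolynomial.eval_monomial, Finsupp.prod_fintype]
  have hp : p = 0 := by
    refine mvPolynomial_eq_zero_of_eval_eq_zero_on_open
      (hU.preimage (PiLp.continuous_toLp 2 _)) ?_ fun x hx ↦ (heval x).trans (hb _ hx)
    exact hne.preimage (WithLp.toLp_surjective 2)
  intro α hα
  simpa [p, MvPolynomial.coeff_sum, MvPolynomial.coeff_monomial, hα] using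
    congrArg (MvPolynomial.coeff α) hp

lemma eq_zero_of_sum_mul_monomialFun_ae_eq_zero {μ : Measure (EuclideanSpace ℝ ι)}
    [μ.IsOpenPosMeasure] {A : Set (EuclideanSpace ℝ ι)} (hA : (interior A).Nonempty)
    {S : Finset (ι →₀ ℕ)} {b : (ι →₀ ℕ) → ℝ}
    (hb : (fun x ↦ ∑ α ∈ S, b α * monomialFun α x) =ᵐ[μ.restrict A] 0) : ∀ α ∈ S, b α = 0 :=
  eq_zero_of_sum_mul_monomialFun_eq_zero_on_open isOpen_interior hA <|
    Measure.eqOn_open_of_ae_eq (ae_restrict_of_ae_restrict_of_subset interior_subset hb)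
      isOpen_interior (by fun_prop) continuousOn_const

theorem stmt1_general (S : Finset (ι →₀ ℕ)) {ρ : ℝ} (hρ : 0 < ρ) :
    ∃ c > 0, ∃ C > 0, ∀ (x₀ : EuclideanSpace ℝ ι) (h : ℝ), 0 < h →
      ∀ K : Set (EuclideanSpace ℝ ι), closedBall x₀ (ρ * h) ⊆ K → K ⊆ closedBall x₀ h →
        ∀ b : (ι →₀ ℕ) → ℝ,
          c * h ^ Fintype.card ι * ∑ α ∈ S, b α ^ 2 ≤
              ∫ x in K, (∑ α ∈ S, b α * monomialFun α (h⁻¹ • (x - x₀))) ^ 2 ∧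
            ∫ x in K, (∑ α ∈ S, b α * monomialFun α (h⁻¹ • (x - x₀))) ^ 2 ≤
              C * h ^ Fintype.card ι * ∑ α ∈ S, b α ^ 2 := by
  obtain ⟨c, hc, hlower⟩ := exists_pos_mul_sum_sq_le_integral_sum_mul_sq (S := S)
    (memLp_two_monomialFun (μ := volume) (isCompact_closedBall 0 ρ)) fun _ ↦
      eq_zero_of_sum_mul_monomialFun_ae_eq_zero
        ((nonempty_ball.2 hρ).mono ball_subset_interior_closedBall)
  obtain ⟨C, hC, hupper⟩ := exists_pos_integral_sum_mul_sq_le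
    (memLp_two_monomialFun (μ := volume) (isCompact_closedBall 0 1)) S
  refine ⟨c, hc, C, hC, fun x₀ h hh K hρK hK b ↦ ?_⟩
  set q : EuclideanSpace ℝ ι → ℝ := fun y ↦ (∑ α ∈ S, b α * monomialFun α y) ^ 2
  set K' : Set (EuclideanSpace ℝ ι) := (fun y ↦ x₀ + h • y) ⁻¹' K
  have hρK' : closedBall 0 ρ ⊆ K' :=
    (preimage_add_smul_closedBall x₀ hh ρ).symm.trans_subset (Set.preimage_mono hρK)
  have hK' : K' ⊆ closedBall 0 1 := by
    rw [← preimage_add_smul_closedBall x₀ hh 1, one_mul]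
    exact Set.preimage_mono hK
  have hint : IntegrableOn q (closedBall 0 1) :=
    ContinuousOn.integrableOn_compact (isCompact_closedBall 0 1) (by fun_prop)
  have hqnonneg {A : Set (EuclideanSpace ℝ ι)} : 0 ≤ᵐ[volume.restrict A] q :=
    ae_of_all _ fun _ ↦ sq_nonneg _
  rw [setIntegral_comp_inv_smul_sub volume q K x₀ hh, finrank_euclideanSpace, smul_eq_mul,
    mul_comm c, mul_comm C, mul_assoc, mul_assoc]
  constructor <;> gcongr
  · exact (hlower b).trans (setIntegral_mono_set (hint.mono_set hK') hqnonneg hρK'.eventuallyLE)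
  · exact (setIntegral_mono_set hint hqnonneg hK'.eventuallyLE).trans (hupper b)

end Monomials

/-- Two-dimensional (bulk) norm equivalence: on a shape-regular element `K` with
`closedBall x0 (ρ*h) ⊆ K ⊆ closedBall x0 h`, the squared `L²(K)` norm of a polynomial
expanded in the shifted and scaled monomial basis
`x ↦ ((x₁ - x0₁)/h)^{α₁} ((x₂ - x0₂)/h)^{α₂}`, `|α| ≤ n`, is equivalent to `h²` times the
squared `ℓ²` norm of its coefficient vector, uniformly in `x0`, `h` and `K`. -/
theorem stmt1 (n : ℕ) (ρ : ℝ) (hρ0 : 0 < ρ) (hρ1 : ρ ≤ 1) :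
    ∃ c > (0 : ℝ), ∃ C > (0 : ℝ),
      ∀ (x0 : EuclideanSpace ℝ (Fin 2)) (h : ℝ), 0 < h →
        ∀ K : Set (EuclideanSpace ℝ (Fin 2)), MeasurableSet K →
          closedBall x0 (ρ * h) ⊆ K → K ⊆ closedBall x0 h →
            ∀ b : ℕ × ℕ → ℝ,
              c * h ^ 2 *
                  (∑ α ∈ (Finset.range (n + 1) ×ˢ Finset.range (n + 1)).filter
                      (fun α => α.1 + α.2 ≤ n), b α ^ 2) ≤
                (∫ x in K,
                  (∑ α ∈ (Finset.range (n + 1) ×ˢ Finset.range (n + 1)).filter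
                      (fun α => α.1 + α.2 ≤ n),
                    b α * ((x 0 - x0 0) / h) ^ α.1 * ((x 1 - x0 1) / h) ^ α.2) ^ 2
                  ∂volume) ∧
              (∫ x in K,
                  (∑ α ∈ (Finset.range (n + 1) ×ˢ Finset.range (n + 1)).filter
                      (fun α => α.1 + α.2 ≤ n),
                    b α * ((x 0 - x0 0) / h) ^ α.1 * ((x 1 - x0 1) / h) ^ α.2) ^ 2
                  ∂volume) ≤
                C * h ^ 2 *
                  (∑ α ∈ (Finset.range (n + 1) ×ˢ Finset.range (n + 1)).filter
                      (fun α => α.1 + α.2 ≤ n), b α ^ 2) := by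
  let e : ℕ × ℕ ≃ (Fin 2 →₀ ℕ) := (finTwoArrowEquiv ℕ).symm.trans Finsupp.equivFunOnFinite.symm
  obtain ⟨c, hc, C, hC, H⟩ := stmt1_general (Finset.map e.toEmbedding
    {α ∈ Finset.range (n + 1) ×ˢ Finset.range (n + 1) | α.1 + α.2 ≤ n}) hρ0
  refine ⟨c, hc, C, hC, fun x0 h hh K _ h₁ h₂ b ↦ ?_⟩
  simpa [e, monomialFun, Fin.prod_univ_two, div_eq_inv_mul, mul_assoc] using
    H x0 h hh K h₁ h₂ (b ∘ e.symm)
end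

section
/- Let a < b be real numbers and let γ : ℝ → ℝ² be differentiable on [a, b] with derivative γ′ that is Lipschitz with constant L ≥ 0 on [a, b]. Define the chord parametrization ζ(t) = γ(a) + ((t − a)/(b − a)) · (γ(b) − γ(a)). Then for every t ∈ [a, b], ‖ γ(t) − ζ(t) ‖ ≤ L · (b − a)², where ‖·‖ is the Euclidean norm on ℝ². -/
/-!
For any linear map `A` and any point `x` of the segment from `a` to `b`, the gap
between `f x` and the chord is, up to sign, a convex combination of the remainders
`f a - f x - A (a - x)` and `f b - f x - A (b - x)`, because the affine parts cancel. If `f'` is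
Lipschitz with constant `L`, then taking `A = f' x` makes both remainders quadratic; when `x`
divides the segment in the ratio `r : 1 - r`, they combine to at most
`L / 2 * (r * (1 - r) * ‖b - a‖ ^ 2)`.
-/

open Set AffineMap

theorem image_lineMap_sub_lineMap_image {R E F : Type*} [CommRing R] [AddCommGroup E] [Module R E]
    [AddCommGroup F] [Module R F] (f : E → F) (A : E →ₗ[R] F) (a b : E) (r : R) :
    f (lineMap a b r) - lineMap (f a) (f b) r =
      -lineMap (f a - f (lineMap a b r) - A (a - lineMap a b r))
        (f b - f (lineMap a b r) - A (b - lineMap a b r)) r := by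
  generalize f (lineMap a b r) = c
  simp only [lineMap_apply_module, map_sub, map_add, map_smul]
  module

section FDeriv

variable {E F : Type*} [NormedAddCommGroup E] [NormedSpace ℝ E]
  [NormedAddCommGroup F] [NormedSpace ℝ F]
  {f : E → F} {f' : E → E →L[ℝ] F} {s : Set E} {L : ℝ}

theorem norm_image_sub_le_of_norm_hasFDerivWithin_le_mul_norm_sub {x y : E}
    (hs : StarConvex ℝ x s) (hy : y ∈ s) (hf : ∀ z ∈ s, HasFDerivWithinAt f (f' z) s z)
    (bound : ∀ z ∈ s, ‖f' z‖ ≤ L * ‖z - x‖) :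
    ‖f y - f x‖ ≤ L / 2 * ‖y - x‖ ^ 2 := by
  have hline : MapsTo (lineMap x y) (Icc (0 : ℝ) 1) s := by
    rw [mapsTo_iff_image_subset, ← segment_eq_image_lineMap]
    exact hs.segment_subset hy
  have hderiv : ∀ τ ∈ Icc (0 : ℝ) 1, HasDerivWithinAt (fun τ ↦ f (lineMap x y τ) - f x)
      (f' (lineMap x y τ) (y - x)) (Icc 0 1) τ := fun τ hτ ↦
    ((hf _ (hline hτ)).comp_hasDerivWithinAt τ hasDerivWithinAt_lineMap hline).sub_const (f x)
  have hquad : ∀ τ : ℝ, HasDerivAt (fun τ ↦ L / 2 * ‖y - x‖ ^ 2 * τ ^ 2)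
      (L * ‖y - x‖ ^ 2 * τ) τ := fun τ ↦ by
    convert! (hasDerivAt_pow 2 τ).const_mul (L / 2 * ‖y - x‖ ^ 2) using 1
    ring
  have hspeed : ∀ τ ∈ Ico (0 : ℝ) 1,
      ‖f' (lineMap x y τ) (y - x)‖ ≤ L * ‖y - x‖ ^ 2 * τ := fun τ hτ ↦
    calc ‖f' (lineMap x y τ) (y - x)‖
        ≤ L * ‖lineMap x y τ - x‖ * ‖y - x‖ :=
          (f' _).le_of_opNorm_le (bound _ (hline (Ico_subset_Icc_self hτ))) _
      _ = L * ‖y - x‖ ^ 2 * τ := by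
          rw [← dist_eq_norm, dist_lineMap_left, dist_comm, dist_eq_norm,
            Real.norm_of_nonneg hτ.1]
          ring
  have hfence := image_norm_le_of_norm_deriv_right_le_deriv_boundary
    (fun τ hτ ↦ (hderiv τ hτ).continuousWithinAt)
    (fun τ hτ ↦ (hderiv τ (Ico_subset_Icc_self hτ)).mono_of_mem_nhdsWithin
      (Icc_mem_nhdsGE_of_mem hτ))
    (by simp) hquad hspeed (right_mem_Icc.2 zero_le_one)
  simpa using hfence

theorem norm_image_sub_sub_le_of_lipschitz_hasFDerivWithin {x y : E}
    (hs : StarConvex ℝ x s) (hy : y ∈ s) (hf : ∀ z ∈ s, HasFDerivWithinAt f (f' z) s z)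
    (hlip : ∀ z ∈ s, ‖f' z - f' x‖ ≤ L * ‖z - x‖) :
    ‖f y - f x - f' x (y - x)‖ ≤ L / 2 * ‖y - x‖ ^ 2 := by
  have h := norm_image_sub_le_of_norm_hasFDerivWithin_le_mul_norm_sub hs hy
    (fun z hz ↦ (hf z hz).sub (f' x).hasFDerivWithinAt) hlip
  convert! h using 2
  simp only [Pi.sub_apply, map_sub]
  abel

theorem norm_image_lineMap_sub_lineMap_image_le_of_lipschitz_hasFDerivWithin {a b : E} {r : ℝ}
    (hs : Convex ℝ s) (ha : a ∈ s) (hb : b ∈ s) (hr : r ∈ Icc (0 : ℝ) 1)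
    (hf : ∀ z ∈ s, HasFDerivWithinAt f (f' z) s z)
    (hlip : ∀ z ∈ s, ∀ w ∈ s, ‖f' z - f' w‖ ≤ L * ‖z - w‖) :
    ‖f (lineMap a b r) - lineMap (f a) (f b) r‖ ≤ L / 2 * (r * (1 - r) * ‖b - a‖ ^ 2) := by
  have hx : lineMap a b r ∈ s := hs.lineMap_mem ha hb hr
  rw [image_lineMap_sub_lineMap_image f (f' (lineMap a b r)).toLinearMap, norm_neg]
  set x := lineMap a b r with hx_def
  have htaylor : ∀ y ∈ s, ‖f y - f x - f' x (y - x)‖ ≤ L / 2 * ‖y - x‖ ^ 2 := fun y hy ↦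
    norm_image_sub_sub_le_of_lipschitz_hasFDerivWithin (hs.starConvex hx) hy hf
      fun z hz ↦ hlip z hz x hx
  have hax : ‖a - x‖ = r * ‖b - a‖ := by
    rw [← dist_eq_norm, hx_def, dist_left_lineMap, Real.norm_of_nonneg hr.1, dist_eq_norm']
  have hbx : ‖b - x‖ = (1 - r) * ‖b - a‖ := by
    rw [← dist_eq_norm, hx_def, dist_right_lineMap, Real.norm_of_nonneg (sub_nonneg.2 hr.2),
      dist_eq_norm']
  calc ‖lineMap (f a - f x - f' x (a - x)) (f b - f x - f' x (b - x)) r‖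
      ≤ (1 - r) * ‖f a - f x - f' x (a - x)‖ + r * ‖f b - f x - f' x (b - x)‖ := by
        rw [lineMap_apply_module]
        exact (convexOn_univ_norm (E := F)).2 (mem_univ _) (mem_univ _)
          (sub_nonneg.2 hr.2) hr.1 (sub_add_cancel 1 r)
    _ ≤ (1 - r) * (L / 2 * ‖a - x‖ ^ 2) + r * (L / 2 * ‖b - x‖ ^ 2) :=
        add_le_add (mul_le_mul_of_nonneg_left (htaylor a ha) (sub_nonneg.2 hr.2))
          (mul_le_mul_of_nonneg_left (htaylor b hb) hr.1)
    _ = L / 2 * (r * (1 - r) * ‖b - a‖ ^ 2) := by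
        rw [hax, hbx]
        ring

end FDeriv

theorem stmt6_general {E : Type*} [NormedAddCommGroup E] [NormedSpace ℝ E] {a b L : ℝ}
    (hab : a < b) {γ γ' : ℝ → E}
    (hdiff : ∀ t ∈ Icc a b, HasDerivWithinAt γ (γ' t) (Icc a b) t)
    (hlip : ∀ s ∈ Icc a b, ∀ t ∈ Icc a b, ‖γ' s - γ' t‖ ≤ L * |s - t|) :
    ∀ t ∈ Icc a b,
      ‖γ t - (γ a + ((t - a) / (b - a)) • (γ b - γ a))‖ ≤ L / 2 * ((t - a) * (b - t)) := by
  intro t ht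
  have hba : 0 < b - a := sub_pos.2 hab
  set r := (t - a) / (b - a) with hr_def
  have hr : r ∈ Icc (0 : ℝ) 1 :=
    ⟨div_nonneg (sub_nonneg.2 ht.1) hba.le, (div_le_one hba).2 (sub_le_sub_right ht.2 a)⟩
  have htr : lineMap a b r = t := by
    rw [lineMap_apply_ring', hr_def, div_mul_cancel₀ _ hba.ne', sub_add_cancel]
  have hlip' : ∀ s ∈ Icc a b, ∀ t ∈ Icc a b,
      ‖ContinuousLinearMap.toSpanSingleton ℝ (γ' s) -
        ContinuousLinearMap.toSpanSingleton ℝ (γ' t)‖ ≤ L * ‖s - t‖ := fun s hs t ht ↦ by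
    simp only [← ContinuousLinearMap.toSpanSingletonLIE_apply, ← map_sub,
      LinearIsometryEquiv.norm_map]
    exact hlip s hs t ht
  have hchord := norm_image_lineMap_sub_lineMap_image_le_of_lipschitz_hasFDerivWithin
    (convex_Icc a b) (left_mem_Icc.2 hab.le) (right_mem_Icc.2 hab.le) hr
    (fun s hs ↦ (hdiff s hs).hasFDerivWithinAt) hlip'
  rw [htr, lineMap_apply_module', add_comm] at hchord
  convert hchord using 2
  rw [Real.norm_of_nonneg hba.le, hr_def]
  field_simp
  ring

/-- Second-order chord–curve closeness estimate: if `γ : ℝ → ℝ²` is differentiable on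
`[a, b]` with derivative `γ'` Lipschitz with constant `L` on `[a, b]`, and
`ζ(t) = γ(a) + ((t - a)/(b - a)) (γ(b) - γ(a))` is the affine parametrization of the chord,
then `‖γ(t) - ζ(t)‖ ≤ L (b - a)²` for every `t ∈ [a, b]`. -/
theorem stmt6 (a b : ℝ) (hab : a < b) (L : ℝ) (hL : 0 ≤ L)
    (γ γ' : ℝ → EuclideanSpace ℝ (Fin 2))
    (hdiff : ∀ t ∈ Set.Icc a b, HasDerivWithinAt γ (γ' t) (Set.Icc a b) t)
    (hlip : ∀ s ∈ Set.Icc a b, ∀ t ∈ Set.Icc a b, ‖γ' s - γ' t‖ ≤ L * |s - t|) :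
    ∀ t ∈ Set.Icc a b,
      ‖γ t - (γ a + ((t - a) / (b - a)) • (γ b - γ a))‖ ≤ L * (b - a) ^ 2 :=
  fun t ht ↦ (stmt6_general hab hdiff hlip t ht).trans <| by
    nlinarith [mul_nonneg hL (sq_nonneg (b - a)), mul_nonneg hL (sq_nonneg (a + b - 2 * t))]
end

section
/- Let a < b be real numbers, let m > 0, and let γ : ℝ → ℝ² be differentiable on [a, b] with derivative γ′ that is Lipschitz with constant L ≥ 0 on [a, b] and satisfies ‖γ′(t)‖ ≥ m for all t ∈ [a, b]. Assume γ(b) ≠ γ(a). Then for every t ∈ [a, b], ‖ γ′(t)/‖γ′(t)‖ − (γ(b) − γ(a))/‖γ(b) − γ(a)‖ ‖ ≤ 2 L (b − a) / m, where ‖·‖ is the Euclidean norm on ℝ². -/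
/-! By the mean value inequality applied to `s ↦ γ s - s • γ' t`, the chord `γ b - γ a` lies within
`L * (b - a) ^ 2` of `(b - a) • γ' t`. Normalizing two vectors `v` and `w` turns the distance
`‖v - w‖` into at most `2 * ‖v - w‖ / ‖v‖`, in any normed space, which gives the bound
`2 * L * (b - a) / ‖γ' t‖`. -/

section

variable {E : Type*} [NormedAddCommGroup E] [NormedSpace ℝ E]

theorem norm_mul_norm_normalize_sub_normalize_le (v w : E) :
    ‖v‖ * ‖NormedSpace.normalize v - NormedSpace.normalize w‖ ≤ 2 * ‖v - w‖ := by
  have decomposition : ‖v‖ • (NormedSpace.normalize v - NormedSpace.normalize w) =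
      (v - w) - (‖v‖ - ‖w‖) • NormedSpace.normalize w := by
    rw [smul_sub, sub_smul, NormedSpace.norm_smul_normalize, NormedSpace.norm_smul_normalize]
    abel
  have normalize_le_one : ‖NormedSpace.normalize w‖ ≤ 1 := by
    rw [NormedSpace.normalize, norm_smul, norm_inv, norm_norm]
    exact inv_mul_le_one
  calc
    ‖v‖ * ‖NormedSpace.normalize v - NormedSpace.normalize w‖
        = ‖(v - w) - (‖v‖ - ‖w‖) • NormedSpace.normalize w‖ := by
          rw [← decomposition, norm_smul, norm_norm]
    _ ≤ ‖v - w‖ + |‖v‖ - ‖w‖| * ‖NormedSpace.normalize w‖ := by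
          rw [← Real.norm_eq_abs, ← norm_smul]
          exact norm_sub_le _ _
    _ ≤ ‖v - w‖ + ‖v - w‖ * 1 := by
          gcongr
          exact abs_norm_sub_norm_le v w
    _ = 2 * ‖v - w‖ := by ring

theorem norm_image_sub_sub_smul_le_of_norm_hasDerivWithin_sub_le {𝕜 G : Type*} [RCLike 𝕜]
    [NormedAddCommGroup G] [NormedSpace 𝕜 G] {f f' : 𝕜 → G} {s : Set 𝕜} {x y : 𝕜} {v : G} {C : ℝ}
    (hf : ∀ z ∈ s, HasDerivWithinAt f (f' z) s z) (bound : ∀ z ∈ s, ‖f' z - v‖ ≤ C)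
    (hs : Convex ℝ s) (hx : x ∈ s) (hy : y ∈ s) :
    ‖f y - f x - (y - x) • v‖ ≤ C * ‖y - x‖ := by
  have hderiv : ∀ z ∈ s, HasDerivWithinAt (fun z ↦ f z - z • v) (f' z - v) s z := fun z hz ↦ by
    simpa only [id, one_smul] using (hf z hz).fun_sub ((hasDerivWithinAt_id z s).smul_const v)
  calc
    ‖f y - f x - (y - x) • v‖ = ‖(f y - y • v) - (f x - x • v)‖ := by congr 1; module
    _ ≤ C * ‖y - x‖ := hs.norm_image_sub_le_of_norm_hasDerivWithin_le hderiv bound hx hy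

theorem norm_mul_norm_normalize_sub_normalize_chord_le {f f' : ℝ → E} {a b C : ℝ} {v : E}
    (hab : a < b) (hf : ∀ s ∈ Set.Icc a b, HasDerivWithinAt f (f' s) (Set.Icc a b) s)
    (bound : ∀ s ∈ Set.Icc a b, ‖f' s - v‖ ≤ C) :
    ‖v‖ * ‖NormedSpace.normalize v - NormedSpace.normalize (f b - f a)‖ ≤ 2 * C := by
  have hlen : 0 < b - a := sub_pos.2 hab
  have chord_approx : ‖(b - a) • v - (f b - f a)‖ ≤ C * (b - a) := by
    have mean_value := norm_image_sub_sub_smul_le_of_norm_hasDerivWithin_sub_le hf bound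
      (convex_Icc a b) (Set.left_mem_Icc.2 hab.le) (Set.right_mem_Icc.2 hab.le)
    rwa [norm_sub_rev, Real.norm_of_nonneg hlen.le] at mean_value
  have scaled := norm_mul_norm_normalize_sub_normalize_le ((b - a) • v) (f b - f a)
  rw [NormedSpace.normalize_smul_of_pos hlen, norm_smul, Real.norm_of_nonneg hlen.le] at scaled
  refine le_of_mul_le_mul_left ?_ hlen
  linarith

theorem stmt7_general {γ γ' : ℝ → E} {a b t m L : ℝ} (ht : t ∈ Set.Icc a b) (hm : 0 < m)
    (hdiff : ∀ s ∈ Set.Icc a b, HasDerivWithinAt γ (γ' s) (Set.Icc a b) s)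
    (hlip : ∀ s ∈ Set.Icc a b, ‖γ' s - γ' t‖ ≤ L * |s - t|)
    (hreg : m ≤ ‖γ' t‖) (hne : γ b ≠ γ a) :
    ‖‖γ' t‖⁻¹ • γ' t - ‖γ b - γ a‖⁻¹ • (γ b - γ a)‖ ≤ 2 * L * (b - a) / m := by
  have hab : a < b := (ht.1.trans ht.2).lt_of_ne fun h ↦ hne (congrArg γ h.symm)
  have hL : 0 ≤ L := by
    have ha := (norm_nonneg _).trans (hlip a (Set.left_mem_Icc.2 hab.le))
    have hb := (norm_nonneg _).trans (hlip b (Set.right_mem_Icc.2 hab.le))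
    rw [abs_of_nonpos (sub_nonpos.2 ht.1)] at ha
    rw [abs_of_nonneg (sub_nonneg.2 ht.2)] at hb
    exact nonneg_of_mul_nonneg_left (by linarith : 0 ≤ L * (b - a)) (sub_pos.2 hab)
  have tangent_variation : ∀ s ∈ Set.Icc a b, ‖γ' s - γ' t‖ ≤ L * (b - a) := fun s hs ↦
    (hlip s hs).trans (mul_le_mul_of_nonneg_left (Real.dist_le_of_mem_Icc hs ht) hL)
  rw [le_div_iff₀' hm, mul_assoc]
  calc
    m * ‖‖γ' t‖⁻¹ • γ' t - ‖γ b - γ a‖⁻¹ • (γ b - γ a)‖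
        ≤ ‖γ' t‖ * ‖‖γ' t‖⁻¹ • γ' t - ‖γ b - γ a‖⁻¹ • (γ b - γ a)‖ := by gcongr
    _ ≤ 2 * (L * (b - a)) :=
          norm_mul_norm_normalize_sub_normalize_chord_le hab hdiff tangent_variation

end

/-- Unit-tangent closeness estimate: for a regular parametrization `γ` of a curved edge
with `‖γ'‖ ≥ m` and `γ'` Lipschitz with constant `L` on `[a, b]`, the unit tangent of the
curve differs from the unit tangent of the chord by at most `2 L (b - a) / m`. -/
theorem stmt7 (a b : ℝ) (hab : a < b) (m : ℝ) (hm : 0 < m) (L : ℝ) (hL : 0 ≤ L)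
    (γ γ' : ℝ → EuclideanSpace ℝ (Fin 2))
    (hdiff : ∀ t ∈ Set.Icc a b, HasDerivWithinAt γ (γ' t) (Set.Icc a b) t)
    (hlip : ∀ s ∈ Set.Icc a b, ∀ t ∈ Set.Icc a b, ‖γ' s - γ' t‖ ≤ L * |s - t|)
    (hreg : ∀ t ∈ Set.Icc a b, m ≤ ‖γ' t‖)
    (hne : γ b ≠ γ a) :
    ∀ t ∈ Set.Icc a b,
      ‖‖γ' t‖⁻¹ • γ' t - ‖γ b - γ a‖⁻¹ • (γ b - γ a)‖ ≤ 2 * L * (b - a) / m := by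
  intro t ht
  exact stmt7_general ht hm hdiff (fun s hs ↦ hlip s hs t ht) (hreg t ht) hne
end

section
/- Let W be a real vector space equipped with a seminorm |·|, let V_h ⊆ W be a linear subspace, and let a, a_h : W → W → ℝ be bilinear maps. Assume there are constants α > 0 and M > 0 such that α · |v|² ≤ a_h(v, v) for all v ∈ V_h, and |a_h(w, v)| ≤ M · |w| · |v| for all w ∈ W and v ∈ V_h. Let u ∈ W and u_h ∈ V_h, let F, F_h, N : W → ℝ be linear functionals, and let δ ≥ 0. Assume: (i) a(u, v) = F(v) + N(v) for all v ∈ V_h; (ii) a_h(u_h, v) = F_h(v) for all v ∈ V_h; (iii) |F(v) − F_h(v)| + |N(v)| + |a_h(u, v) − a(u, v)| ≤ δ · |v| for all v ∈ V_h. Then for every u_I ∈ V_h, |u − u_h| ≤ (1 + M/α) · |u − u_I| + δ/α. -/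
/-!
Put `e = u_I - u_h ∈ V_h` and split `e = (u - u_h) - (u - u_I)` in the first slot of `a_h(e, e)`.
The term `a_h(u - u_h, e)` is the residual of `u` in the discrete problem, at most `δ |e|`, and
boundedness controls the other term by `M |u - u_I| |e|`. Coercivity then lets one factor `|e|`
cancel, and the triangle inequality passes from `e` to `u - u_h`.
-/

lemma le_div_of_mul_sq_le_mul {K : Type*} [Field K] [LinearOrder K] [IsStrictOrderedRing K]
    {α c x : K} (hα : 0 < α) (hc : 0 ≤ c) (hx : 0 ≤ x) (h : α * x ^ 2 ≤ c * x) : x ≤ c / α := by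
  rcases hx.eq_or_lt with rfl | hx_pos
  · exact div_nonneg hc hα.le
  · rw [le_div_iff₀' hα]
    refine le_of_mul_le_mul_right ?_ hx_pos
    rwa [mul_assoc, ← sq]

lemma norm_sub_le_of_eq_add {E : Type*} [SeminormedAddCommGroup E] {x y f g n : E}
    (hy : y = f + n) : ‖x - g‖ ≤ ‖f - g‖ + ‖n‖ + ‖x - y‖ := by
  have hsplit : x - g = (f - g) + n + (x - y) := by rw [hy]; abel
  rw [hsplit]
  exact norm_add₃_le

section Strang

variable {W E : Type*} [AddGroup W] [SeminormedAddCommGroup E]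
  {p : AddGroupSeminorm W} {Vh : AddSubgroup W} {ah : W →+ W → E} {α M δ : ℝ} {u uh uI : W}

lemma norm_apply_sub_sub_le_of_residual_le
    (hbdd : ∀ w : W, ∀ v ∈ Vh, ‖ah w v‖ ≤ M * p w * p v)
    (hres : ∀ v ∈ Vh, ‖ah (u - uh) v‖ ≤ δ * p v) (huh : uh ∈ Vh) (huI : uI ∈ Vh) :
    ‖ah (uI - uh) (uI - uh)‖ ≤ (M * p (u - uI) + δ) * p (uI - uh) := by
  have he : uI - uh ∈ Vh := sub_mem huI huh
  have hsplit : ah (uI - uh) = ah (u - uh) - ah (u - uI) := by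
    simp only [map_sub, sub_sub_sub_cancel_left]
  calc ‖ah (uI - uh) (uI - uh)‖
      = ‖ah (u - uh) (uI - uh) - ah (u - uI) (uI - uh)‖ := by
        conv_lhs => rw [hsplit, Pi.sub_apply]
    _ ≤ ‖ah (u - uh) (uI - uh)‖ + ‖ah (u - uI) (uI - uh)‖ := norm_sub_le _ _
    _ ≤ δ * p (uI - uh) + M * p (u - uI) * p (uI - uh) :=
        add_le_add (hres _ he) (hbdd _ _ he)
    _ = (M * p (u - uI) + δ) * p (uI - uh) := by ring

lemma map_sub_le_of_coercive_of_residual_le (hα : 0 < α) (hM : 0 ≤ M) (hδ : 0 ≤ δ)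
    (hcoer : ∀ v ∈ Vh, α * p v ^ 2 ≤ ‖ah v v‖)
    (hbdd : ∀ w : W, ∀ v ∈ Vh, ‖ah w v‖ ≤ M * p w * p v)
    (hres : ∀ v ∈ Vh, ‖ah (u - uh) v‖ ≤ δ * p v) (huh : uh ∈ Vh) (huI : uI ∈ Vh) :
    p (u - uh) ≤ (1 + M / α) * p (u - uI) + δ / α := by
  have hdiscrete_error : p (uI - uh) ≤ (M * p (u - uI) + δ) / α :=
    le_div_of_mul_sq_le_mul hα (add_nonneg (mul_nonneg hM (apply_nonneg p _)) hδ)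
      (apply_nonneg p _)
      ((hcoer _ (sub_mem huI huh)).trans
        (norm_apply_sub_sub_le_of_residual_le hbdd hres huh huI))
  calc p (u - uh) ≤ p (u - uI) + p (uI - uh) := le_map_sub_add_map_sub p u uI uh
    _ ≤ p (u - uI) + (M * p (u - uI) + δ) / α := by gcongr
    _ = (1 + M / α) * p (u - uI) + δ / α := by ring

-- `W →+ W → E` accommodates real bilinear and complex sesquilinear forms alike.
theorem stmt11_general {a : W → W → E} {F Fh N : W → E}
    (hα : 0 < α) (hM : 0 ≤ M) (hcoer : ∀ v ∈ Vh, α * p v ^ 2 ≤ ‖ah v v‖)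
    (hbdd : ∀ w : W, ∀ v ∈ Vh, ‖ah w v‖ ≤ M * p w * p v) (huh : uh ∈ Vh) (hδ : 0 ≤ δ)
    (hexact : ∀ v ∈ Vh, a u v = F v + N v) (hdiscrete : ∀ v ∈ Vh, ah uh v = Fh v)
    (hpert : ∀ v ∈ Vh, ‖F v - Fh v‖ + ‖N v‖ + ‖ah u v - a u v‖ ≤ δ * p v) (huI : uI ∈ Vh) :
    p (u - uh) ≤ (1 + M / α) * p (u - uI) + δ / α := by
  have hres : ∀ v ∈ Vh, ‖ah (u - uh) v‖ ≤ δ * p v := by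
    intro v hv
    rw [map_sub, Pi.sub_apply, hdiscrete v hv]
    exact (norm_sub_le_of_eq_add (hexact v hv)).trans (hpert v hv)
  exact map_sub_le_of_coercive_of_residual_le hα hM hδ hcoer hbdd hres huh huI

end Strang

/-- Abstract Strang-type error estimate: with a seminorm `p` on `W`, a subspace `V_h`,
bilinear forms `a`, `a_h` such that `a_h` is coercive on `V_h` (constant `α`) and bounded
(constant `M`), exact and discrete solutions `u`, `u_h` related through load functionals
`F`, `F_h` and a nonconformity functional `N`, with total perturbation bounded by `δ`,
one has `p (u - u_h) ≤ (1 + M/α) p (u - u_I) + δ/α` for every `u_I ∈ V_h`. -/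
theorem stmt11 {W : Type*} [AddCommGroup W] [Module ℝ W]
    (p : Seminorm ℝ W) (Vh : Submodule ℝ W)
    (a ah : W →ₗ[ℝ] W →ₗ[ℝ] ℝ)
    (α Mc : ℝ) (hα : 0 < α) (hM : 0 < Mc)
    (hcoer : ∀ v ∈ Vh, α * (p v) ^ 2 ≤ ah v v)
    (hbdd : ∀ w : W, ∀ v ∈ Vh, |ah w v| ≤ Mc * p w * p v)
    (u : W) (uh : W) (huh : uh ∈ Vh)
    (F Fh N : W →ₗ[ℝ] ℝ) (δ : ℝ) (hδ : 0 ≤ δ)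
    (hexact : ∀ v ∈ Vh, a u v = F v + N v)
    (hdiscrete : ∀ v ∈ Vh, ah uh v = Fh v)
    (hpert : ∀ v ∈ Vh, |F v - Fh v| + |N v| + |ah u v - a u v| ≤ δ * p v) :
    ∀ uI ∈ Vh, p (u - uh) ≤ (1 + Mc / α) * p (u - uI) + δ / α := fun _ huI ↦
  stmt11_general (p := p.toAddGroupSeminorm) (Vh := Vh.toAddSubgroup)
    (ah := (LinearMap.ltoFun ℝ W ℝ ℝ ∘ₗ ah).toAddMonoidHom) (a := fun w ↦ a w) hα hM.le
    (fun v hv ↦ (hcoer v hv).trans (le_abs_self _)) hbdd huh hδ hexact hdiscrete hpert huI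
end
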